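/- Let 𝕏 ⊆ ℙ^n_K be a 0-dimensional scheme and 0 ≤ d ≤ r_𝕏 − 1. Then 𝕏 has CBP(d) if and only if 𝔉_{R̃/R} ⊆ ⊕_{i ≥ d+1} R_i. In particular, 𝕏 is a Cayley–Bacharach scheme if and only if 𝔉_{R̃/R} = ⊕_{i ≥ r_𝕏} R_i. -/

import Mathlib

noncomputable section

/-! An algebraic model for a 0-dimensional subscheme `𝕏 ⊆ ℙⁿ_K` whose support avoids
the hyperplane `Z(X₀)`.  The scheme is recorded through the local rings
`𝒪_{𝕏,p_j}` at the points `p_1, …, p_s` of its support, together with the germ map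
sending a homogeneous polynomial `F` of degree `i` to the tuple of germs
`(F_{p_1}, …, F_{p_s})`; this is the degree-`i` component of the injection
`ĩ : R → Q^h(R) ≅ ∏_j 𝒪_{𝕏,p_j}[T_j, T_j⁻¹]`, where every graded component of
`Q^h(R)` is identified with `Γ = ∏_j 𝒪_{𝕏,p_j}` by dropping the powers of the `T_j`.
Since `x₀` has germ `1` at every point, the homogeneous coordinate ring
`R = P/I_𝕏` is faithfully encoded by the chain of subspaces
`R_i ≅ V_i = germ(P_i) ⊆ Γ` (with `V_i ⊆ V_{i+1}`, and `V_i = Γ` for `i ≫ 0`). -/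

/-- The data of one (fat) point of a 0-dimensional scheme: a finite local `K`-algebra. -/
structure PointData (K : Type) [Field K] : Type 1 where
  carrier : Type
  [ring : CommRing carrier]
  [alg : Algebra K carrier]
  [loc : IsLocalRing carrier]
  [findim : FiniteDimensional K carrier]

attribute [instance] PointData.ring PointData.alg PointData.loc PointData.findim

/-- A model of a 0-dimensional subscheme of `ℙⁿ_K`, no point of whose support lies
on `Z(X₀)` (coordinates being chosen so that each point has `X₀`-coordinate 1, the
germ of `x₀` at every point is `1`). -/
structure ZeroDimScheme (K : Type) [Field K] (n : ℕ) : Type 1 where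
  /-- the number of points in the support -/
  s : ℕ
  spos : 0 < s
  /-- the local rings `𝒪_{𝕏,p_j}` -/
  pt : Fin s → PointData K
  /-- the germ map: for `F` homogeneous of degree `i` this is the degree-`i`
  component of `ĩ : R → Q^h(R)`, i.e. `F ↦ (F_{p_1}, …, F_{p_s})` -/
  germ : MvPolynomial (Fin (n + 1)) K →ₐ[K] ∀ j, (pt j).carrier
  /-- the germ of `X₀` at each point is `1` -/
  germ_X0 : germ (MvPolynomial.X 0) = 1
  /-- in all large degrees, the germ map is surjective onto `∏_j 𝒪_{𝕏,p_j}`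
  (this characterizes `I_𝕏` as the full homogeneous vanishing ideal of the scheme) -/
  eventually_surj : ∃ N : ℕ, ∀ i, N ≤ i →
    Submodule.map germ.toLinearMap
      (MvPolynomial.homogeneousSubmodule (Fin (n + 1)) K i) = ⊤

namespace ZeroDimScheme

variable {K : Type} [Field K] {n : ℕ}

/-- `Γ = ∏_j 𝒪_{𝕏,p_j}`, the common model for every graded component of `Q^h(R)`. -/
abbrev Gamma (S : ZeroDimScheme K n) : Type := ∀ j, (S.pt j).carrier

variable (S : ZeroDimScheme K n)

/-- `V i ⊆ Γ` is the image of the degree-`i` component `R_i` of the homogeneous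
coordinate ring `R` under (the degree-`i` component of) `ĩ`; we identify `R_i ≅ V i`. -/
def V (i : ℕ) : Submodule K S.Gamma :=
  Submodule.map S.germ.toLinearMap
    (MvPolynomial.homogeneousSubmodule (Fin (n + 1)) K i)

/-- `R_i` for `i : ℤ` (zero in negative degrees). -/
def Vz (i : ℤ) : Submodule K S.Gamma := if 0 ≤ i then S.V i.toNat else ⊥

/-- `deg 𝕏 = Σ_j dim_K 𝒪_{𝕏,p_j}`. -/
def degX : ℕ := Module.finrank K S.Gamma

/-- The Hilbert function `HF_𝕏(i) = dim_K R_i`. -/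
def HF (i : ℕ) : ℕ := Module.finrank K (S.V i)

/-- The Hilbert function on `ℤ`. -/
def HFz (i : ℤ) : ℕ := Module.finrank K (S.Vz i)

/-- The regularity index `r_𝕏`: the least `r` with `HF_𝕏(i) = deg 𝕏` for all `i ≥ r`. -/
def rX : ℕ := sInf {r : ℕ | ∀ i, r ≤ i → S.HF i = S.degX}

/-- `κ_j = dim_K κ(p_j)`, the residue field of `𝕏` at `p_j`. -/
def kappa (j : Fin S.s) : ℕ :=
  Module.finrank K
    ((S.pt j).carrier ⧸
      Submodule.restrictScalars K (IsLocalRing.maximalIdeal (S.pt j).carrier))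

/-- `sj` is a socle element of `𝒪_{𝕏,p_j}`, i.e. `sj ∈ Ann(𝔪_{𝕏,p_j})`.  By
Proposition 1.2, the maximal `p_j`-subschemes `𝕐 ⊆ 𝕏` correspond 1-1 to the ideals
of `Γ` generated by `(0,…,0,sj,0,…,0)` with `sj` a *nonzero* socle element. -/
def IsSocle (j : Fin S.s) (sj : (S.pt j).carrier) : Prop :=
  ∀ b ∈ IsLocalRing.maximalIdeal (S.pt j).carrier, sj * b = 0

/-- The ideal `U = ⟨(0,…,0,sj,0,…,0)⟩` of `Γ` corresponding to the maximal
`p_j`-subscheme `𝕐` determined by the socle element `sj`; one has `I_{𝕐/𝕏} = ĩ⁻¹(U)`. -/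
def sepIdeal (j : Fin S.s) (sj : (S.pt j).carrier) : Submodule K S.Gamma :=
  Submodule.restrictScalars K (Ideal.span {(Pi.single j sj : S.Gamma)})

/-- The degree-`i` component `(I_{𝕐/𝕏})_i = R_i ∩ ĩ⁻¹(U)` of the ideal of the maximal
`p_j`-subscheme `𝕐` (given by the socle element `sj`) in `R`. -/
def IY (j : Fin S.s) (sj : (S.pt j).carrier) (i : ℕ) : Submodule K S.Gamma :=
  S.V i ⊓ S.sepIdeal j sj

/-- `(I_{𝕐/𝕏})_i` for `i : ℤ`. -/
def IYz (j : Fin S.s) (sj : (S.pt j).carrier) (i : ℤ) : Submodule K S.Gamma :=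
  S.Vz i ⊓ S.sepIdeal j sj

/-- The Hilbert function `HF_𝕐(i) = HF_𝕏(i) - dim_K (I_{𝕐/𝕏})_i` of the maximal
`p_j`-subscheme `𝕐` given by the socle element `sj`. -/
def HFY (j : Fin S.s) (sj : (S.pt j).carrier) (i : ℕ) : ℕ :=
  S.HF i - Module.finrank K (S.IY j sj i)

/-- `HF_𝕐` on `ℤ`. -/
def HFYz (j : Fin S.s) (sj : (S.pt j).carrier) (i : ℤ) : ℕ :=
  S.HFz i - Module.finrank K (S.IYz j sj i)

/-- `α_{𝕐/𝕏} = min {i | (I_{𝕐/𝕏})_i ≠ 0}`. -/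
def alphaY (j : Fin S.s) (sj : (S.pt j).carrier) : ℕ :=
  sInf {i : ℕ | S.IY j sj i ≠ ⊥}

/-- `μ(a) = min {i | (0,…,0,a T_j^i,0,…,0) ∈ ĩ(R)}` for `a ∈ 𝒪_{𝕏,p_j}`. -/
def mu (j : Fin S.s) (a : (S.pt j).carrier) : ℕ :=
  sInf {i : ℕ | (Pi.single j a : S.Gamma) ∈ S.V i}

/-- `μ_{𝕐/𝕏}`, the maximal degree of a minimal separator of the maximal
`p_j`-subscheme `𝕐` given by the socle element `sj`; independently of all choices it
equals `max {μ(a·sj) | a ∈ 𝒪_{𝕏,p_j}, a·sj ≠ 0}`. -/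
def muY (j : Fin S.s) (sj : (S.pt j).carrier) : ℕ :=
  sSup {m : ℕ | ∃ a : (S.pt j).carrier, a * sj ≠ 0 ∧ m = S.mu j (a * sj)}

/-- `deg_𝕏(p_j) = min {μ_{𝕐/𝕏} | 𝕐 a maximal p_j-subscheme of 𝕏}`. -/
def degP (j : Fin S.s) : ℕ :=
  sInf {m : ℕ | ∃ sj : (S.pt j).carrier, S.IsSocle j sj ∧ sj ≠ 0 ∧ m = S.muY j sj}

/-- `𝕏` has the Cayley–Bacharach property of degree `d`: `deg_𝕏(p_j) ≥ d + 1` for all `j`. -/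
def CBP (d : ℕ) : Prop := ∀ j : Fin S.s, d + 1 ≤ S.degP j

/-- `𝕏` is a Cayley–Bacharach scheme: it has `CBP(r_𝕏 - 1)`. -/
def CayleyBacharach : Prop := S.CBP (S.rX - 1)

/-- The residue class map `𝒪_{𝕏,p_j} → κ(p_j)` as a `K`-linear map. -/
def resQ (j : Fin S.s) :
    (S.pt j).carrier →ₗ[K]
      ((S.pt j).carrier ⧸
        Submodule.restrictScalars K (IsLocalRing.maximalIdeal (S.pt j).carrier)) :=
  (Submodule.restrictScalars K (IsLocalRing.maximalIdeal (S.pt j).carrier)).mkQ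

/-- The residue classes of `e 0, …, e (κ_j - 1)` form a `K`-basis of `κ(p_j)`. -/
def IsResidueBasis (j : Fin S.s) {m : ℕ} (e : Fin m → (S.pt j).carrier) : Prop :=
  LinearIndependent K (fun k => S.resQ j (e k)) ∧
    Submodule.span K (Set.range fun k => S.resQ j (e k)) = ⊤

/-- A family `τ_j : 𝒪_{𝕏,p_j} → K` of trace maps: each `τ_j` is a generator of
`Hom_K(𝒪_{𝕏,p_j}, K)` as an `𝒪_{𝕏,p_j}`-module.  Such a family exists iff `𝕏` is
locally Gorenstein, and it induces a homogeneous trace map `σ` of degree zero of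
`Q^h(R)/L₀` (componentwise). -/
def IsTraceFamily (τ : ∀ j, (S.pt j).carrier →ₗ[K] K) : Prop :=
  ∀ j, Function.Bijective
    (fun a : (S.pt j).carrier => (τ j).comp (LinearMap.mulRight K a))

/-- The total trace `Γ → K`, `y ↦ Σ_j τ_j (y_j)`; on the degree-`i` component of
`Q^h(R)` the trace map `σ` is `q ↦ (Ttot τ q)·x₀^i`. -/
def Ttot (τ : ∀ j, (S.pt j).carrier →ₗ[K] K) : S.Gamma →ₗ[K] K :=
  ∑ j : Fin S.s, (τ j).comp (LinearMap.proj j)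

/-- The degree-`k` component `(𝔠^σ_𝕏)_k ⊆ Q^h(R)_k ≅ Γ` of the Dedekind complementary
module: `g ∈ (𝔠^σ_𝕏)_k` iff `σ(g · R) ⊆ K[x₀]`, i.e. `Ttot τ (g·x) = 0` whenever
`x ∈ R_i` with `k + i < 0`. -/
def Cmod (τ : ∀ j, (S.pt j).carrier →ₗ[K] K) (k : ℤ) : Submodule K S.Gamma :=
  ⨅ (i : ℕ) (_ : k + (i : ℤ) < 0) (x : S.Gamma) (_ : x ∈ S.V i),
    LinearMap.ker ((S.Ttot τ).comp (LinearMap.mulRight K x))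

/-- The degree-`i` component `(δ^σ_𝕏)_i ⊆ Q^h(R)_i ≅ Γ` of the Dedekind different
`δ^σ_𝕏 = {f ∈ Q^h(R) | f · 𝔠^σ_𝕏 ⊆ R}`. -/
def delta (τ : ∀ j, (S.pt j).carrier →ₗ[K] K) (i : ℤ) : Submodule K S.Gamma :=
  ⨅ (k : ℤ) (g : S.Gamma) (_ : g ∈ S.Cmod τ k),
    Submodule.comap (LinearMap.mulRight K g) (S.Vz (i + k))

/-- The Hilbert function of the Dedekind different. -/
def HFdelta (τ : ∀ j, (S.pt j).carrier →ₗ[K] K) (i : ℤ) : ℕ :=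
  Module.finrank K (S.delta τ i)

/-- `𝕏` has minimal Dedekind different: `δ^σ_𝕏 = ⊕_{i ≥ 2 r_𝕏} R_i`
(recall `R_i ≅ Γ` for `i ≥ r_𝕏`). -/
def MinimalDedekind (τ : ∀ j, (S.pt j).carrier →ₗ[K] K) : Prop :=
  ∀ i : ℤ, S.delta τ i = if 2 * (S.rX : ℤ) ≤ i then ⊤ else ⊥

/-- The degree-`i` component (`i ≥ 0`) of the conductor
`𝔉_{R̃/R} = {f ∈ R̃ | f·R̃ ⊆ R}` of `R` in `R̃ = ∏_j 𝒪_{𝕏,p_j}[T_j]`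
(whose degree-`i` component is all of `Γ` for every `i ≥ 0`). -/
def cond (i : ℕ) : Submodule K S.Gamma :=
  ⨅ y : S.Gamma, Submodule.comap (LinearMap.mulRight K y) (S.V i)

/-- The conductor on `ℤ` (zero in negative degrees, where `R̃` vanishes). -/
def condZ (i : ℤ) : Submodule K S.Gamma := if 0 ≤ i then S.cond i.toNat else ⊥

/-- The degree-`i` component of the trace `tr(𝔠^σ_𝕏) = δ^σ_𝕏 · 𝔠^σ_𝕏` of the
Dedekind complementary module. -/
def trC (τ : ∀ j, (S.pt j).carrier →ₗ[K] K) (i : ℤ) : Submodule K S.Gamma :=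
  ⨆ (a : ℤ) (b : ℤ) (_ : a + b = i), S.delta τ a * S.Cmod τ b

/-- `𝕏` is nearly Gorenstein: `𝔪 ⊆ tr(𝔠^σ_𝕏)`. -/
def NearlyGorenstein (τ : ∀ j, (S.pt j).carrier →ₗ[K] K) : Prop :=
  ∀ i : ℤ, 1 ≤ i → S.Vz i ≤ S.trC τ i

/-- `𝕏` is almost Gorenstein: there is an exact sequence of graded `R`-modules
`0 → R → 𝔠^σ_𝕏(-r_𝕏) → C → 0` with `𝔪·C = 0`.  A degree-zero graded injection
`R → 𝔠^σ_𝕏(-r_𝕏)` is multiplication by an element `g ∈ (𝔠^σ_𝕏)_{-r_𝕏}` with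
`Ann_R(g) = 0`, and `𝔪·C = 0` means `𝔪 · 𝔠^σ_𝕏(-r_𝕏) ⊆ g·R`. -/
def AlmostGorenstein (τ : ∀ j, (S.pt j).carrier →ₗ[K] K) : Prop :=
  ∃ g ∈ S.Cmod τ (-(S.rX : ℤ)),
    (∀ i : ℕ, ∀ x ∈ S.V i, x * g = 0 → x = 0) ∧
    (∀ a : ℕ, 1 ≤ a → ∀ x ∈ S.V a, ∀ k : ℤ, ∀ h ∈ S.Cmod τ k,
      x * h ∈ Submodule.map (LinearMap.mulRight K g) (S.Vz ((a : ℤ) + k + (S.rX : ℤ))))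

/-- `𝕏` is arithmetically Gorenstein, i.e. `R` is a Gorenstein ring; equivalently the
canonical module is free of rank one: `𝔠^σ_𝕏 = g·R` for some `g ∈ (𝔠^σ_𝕏)_{-r_𝕏}`. -/
def ArithGorenstein (τ : ∀ j, (S.pt j).carrier →ₗ[K] K) : Prop :=
  ∃ g ∈ S.Cmod τ (-(S.rX : ℤ)),
    ∀ k : ℤ, S.Cmod τ k = Submodule.map (LinearMap.mulRight K g) (S.Vz (k + (S.rX : ℤ)))

/-- `𝕏` is level: the socle of `R̄ = R/⟨x₀⟩` equals `R̄_{r_𝕏}`, i.e. no nonzero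
homogeneous element of `R̄` of degree `< r_𝕏` is annihilated by `𝔪̄` (recall
`R̄_i ≅ V i / V (i-1)` and `x₀`-multiplication preserves germs). -/
def Level : Prop :=
  ∀ i : ℕ, i < S.rX → ∀ x ∈ S.V i,
    (∀ a : ℕ, 1 ≤ a → ∀ y ∈ S.V a, x * y ∈ S.Vz ((i : ℤ) + (a : ℤ) - 1)) →
      x ∈ S.Vz ((i : ℤ) - 1)

/-- The subspace `{x ∈ Γ | x_k = 0 for k ≠ j}` of `Γ`: the degreewise model for the
ideal of the subscheme `𝕐_j ⊆ 𝕏` with `I_{𝕐_j} = ∩_{k ≠ j} I_k`. -/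
def Wj (j : Fin S.s) : Submodule K S.Gamma :=
  ⨅ (k : Fin S.s) (_ : k ≠ j),
    LinearMap.ker (LinearMap.proj k : S.Gamma →ₗ[K] (S.pt k).carrier)

/-- `(I_{𝕐_j/𝕏})_i` for the subscheme `𝕐_j` complementary to `p_j`. -/
def IW (j : Fin S.s) (i : ℕ) : Submodule K S.Gamma := S.V i ⊓ S.Wj j

/-- The Hilbert function of the subscheme `𝕐_j` complementary to `p_j`. -/
def HFW (j : Fin S.s) (i : ℕ) : ℕ := S.HF i - Module.finrank K (S.IW j i)

/-- `α_{𝕐_j/𝕏}` for the subscheme `𝕐_j` complementary to `p_j`. -/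
def alphaW (j : Fin S.s) : ℕ := sInf {i : ℕ | S.IW j i ≠ ⊥}

/-- The subspace `{x ∈ Γ | x_k = 0 for k ∉ {j₁, j₂}}` of `Γ`: the degreewise model for
the ideal in `R` of the subscheme of the reduced scheme `𝕏` complementary to `{p_{j₁}, p_{j₂}}`. -/
def Wpair (j1 j2 : Fin S.s) : Submodule K S.Gamma :=
  ⨅ (k : Fin S.s) (_ : k ≠ j1) (_ : k ≠ j2),
    LinearMap.ker (LinearMap.proj k : S.Gamma →ₗ[K] (S.pt k).carrier)

/-- The homogeneous vanishing ideal `I_𝕏 ⊆ P`. -/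
def IX : Ideal (MvPolynomial (Fin (n + 1)) K) :=
  Ideal.span {F | (∃ i : ℕ, F ∈ MvPolynomial.homogeneousSubmodule (Fin (n + 1)) K i) ∧
    S.germ F = 0}

/-- The `n×n`-minor (Jacobian determinant with respect to `X_1, …, X_n`) of an
`n`-tuple of polynomials. -/
def jacMinor (Fs : Fin n → MvPolynomial (Fin (n + 1)) K) : MvPolynomial (Fin (n + 1)) K :=
  Matrix.det (Matrix.of fun a b : Fin n => MvPolynomial.pderiv (Fin.succ b) (Fs a))

/-- The preimage in `P` of the Kähler different `ϑ_𝕏 ⊆ R`: the ideal generated by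
`I_𝕏` together with all `n×n` minors of the Jacobian matrix of elements of `I_𝕏`. -/
def KaehlerIdeal : Ideal (MvPolynomial (Fin (n + 1)) K) :=
  S.IX ⊔ Ideal.span {m | ∃ Fs : Fin n → MvPolynomial (Fin (n + 1)) K,
    (∀ a, Fs a ∈ S.IX) ∧ m = jacMinor Fs}

/-- The degree-`i` component of the Kähler different `ϑ_𝕏 ⊆ R`, viewed inside `Γ`. -/
def thetaPiece (i : ℕ) : Submodule K S.Gamma :=
  Submodule.map S.germ.toLinearMap
    (Submodule.restrictScalars K S.KaehlerIdeal ⊓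
      MvPolynomial.homogeneousSubmodule (Fin (n + 1)) K i)

end ZeroDimScheme

end
theorem aux_socle {A : Type} [CommRing A] [IsLocalRing A] (k : ℕ) :
    ∀ x : A, x ≠ 0 → (∀ y ∈ IsLocalRing.maximalIdeal A ^ k, x * y = 0) →
      ∃ a : A, x * a ≠ 0 ∧ ∀ b ∈ IsLocalRing.maximalIdeal A, x * a * b = 0 := by
  induction k with
  | zero =>
    intro x hx h
    exact absurd (by simpa using h 1 (by simp)) hx
  | succ k ih =>
    intro x hx h
    by_cases hb : ∃ b ∈ IsLocalRing.maximalIdeal A, x * b ≠ 0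
    · obtain ⟨b, hb, hxb⟩ := hb
      obtain ⟨a, ha, ha'⟩ := ih (x * b) hxb (fun y hy => by
        rw [mul_assoc]
        refine h _ ?_
        rw [pow_succ', ]
        exact Ideal.mul_mem_mul hb hy)
      exact ⟨b * a, by rwa [← mul_assoc], by simpa only [← mul_assoc] using ha'⟩
    · push Not at hb
      exact ⟨1, by simpa using hx, by simpa using hb⟩

namespace ZeroDimScheme

theorem aux_exists_socle {K : Type} [Field K] {n : ℕ} (S : ZeroDimScheme K n) (j : Fin S.s)
    (x : (S.pt j).carrier) (hx : x ≠ 0) :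
    ∃ a, x * a ≠ 0 ∧ S.IsSocle j (x * a) := by
  have : IsArtinianRing (S.pt j).carrier := IsArtinianRing.of_finite K _
  obtain ⟨N, hN⟩ := IsArtinianRing.isNilpotent_jacobson_bot (R := (S.pt j).carrier)
  rw [IsLocalRing.jacobson_eq_maximalIdeal ⊥ bot_ne_top] at hN
  exact aux_socle N x hx (fun y hy => by
    rw [hN] at hy
    have : y = 0 := by simpa using hy
    simp [this])

theorem aux_V_mono {K : Type} [Field K] {n : ℕ} (S : ZeroDimScheme K n) : Monotone S.V := by
  refine monotone_nat_of_le_succ fun i => ?_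
  rintro _ ⟨F, hF, rfl⟩
  refine ⟨F * MvPolynomial.X 0, ?_, ?_⟩
  · have h1 : F.IsHomogeneous i := hF
    exact h1.mul (MvPolynomial.isHomogeneous_X K 0)
  · simp [S.germ_X0]

theorem aux_mu_le {K : Type} [Field K] {n : ℕ} (S : ZeroDimScheme K n) (j : Fin S.s)
    (a : (S.pt j).carrier) (i : ℕ) :
    S.mu j a ≤ i ↔ (Pi.single j a : S.Gamma) ∈ S.V i := by
  constructor
  · intro h
    obtain ⟨N, hN⟩ := S.eventually_surj
    have hne : {i : ℕ | (Pi.single j a : S.Gamma) ∈ S.V i}.Nonempty :=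
      ⟨N, by
        have : S.V N = ⊤ := hN N le_rfl
        simp [this]⟩
    exact S.aux_V_mono h (Nat.sInf_mem hne)
  · intro h
    exact Nat.sInf_le h

theorem aux_muY_le {K : Type} [Field K] {n : ℕ} (S : ZeroDimScheme K n) (j : Fin S.s)
    (sj : (S.pt j).carrier) (hs : sj ≠ 0) (i : ℕ) :
    S.muY j sj ≤ i ↔ ∀ a, (Pi.single j (a * sj) : S.Gamma) ∈ S.V i := by
  obtain ⟨N, hN⟩ := S.eventually_surj
  have hNt : S.V N = ⊤ := hN N le_rfl
  constructor
  · intro h a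
    by_cases ha : a * sj = 0
    · simp [ha]
    · rw [← aux_mu_le]
      refine le_trans (le_csSup (s := {m : ℕ | ∃ a : (S.pt j).carrier,
        a * sj ≠ 0 ∧ m = S.mu j (a * sj)}) ⟨N, ?_⟩ ⟨a, ha, rfl⟩) h
      rintro m ⟨b, -, rfl⟩
      rw [aux_mu_le, hNt]
      trivial
  · intro h
    refine csSup_le ⟨_, 1, by simpa using hs, rfl⟩ ?_
    rintro m ⟨b, -, rfl⟩
    exact (aux_mu_le S j _ i).2 (h b)

theorem aux_mem_cond {K : Type} [Field K] {n : ℕ} (S : ZeroDimScheme K n) (i : ℕ)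
    (f : S.Gamma) : f ∈ S.cond i ↔ ∀ y : S.Gamma, f * y ∈ S.V i := by
  simp [cond, Submodule.mem_iInf]

theorem aux_single_mul {K : Type} [Field K] {n : ℕ} (S : ZeroDimScheme K n) (j : Fin S.s)
    (a : (S.pt j).carrier) (y : S.Gamma) :
    (Pi.single j a : S.Gamma) * y = Pi.single j (a * y j) := by
  ext k
  by_cases h : k = j
  · subst h; simp
  · simp [h]

theorem aux_CBP {K : Type} [Field K] {n : ℕ} (S : ZeroDimScheme K n) (d : ℕ) :
    S.CBP d ↔ ∀ i : ℕ, i ≤ d → S.cond i = ⊥ := by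
  constructor
  · intro h i hi
    rw [Submodule.eq_bot_iff]
    intro f hf
    by_contra hne
    obtain ⟨j, hj⟩ := Function.ne_iff.1 hne
    obtain ⟨a, ha, hs⟩ := S.aux_exists_socle j (f j) hj
    have h1 : S.muY j (f j * a) ≤ i := by
      rw [aux_muY_le S j _ ha]
      intro b
      have h2 := (S.aux_mem_cond i f).1 hf (Pi.single j (b * a))
      rw [mul_comm, aux_single_mul] at h2
      convert h2 using 2
      ring
    have h3 : S.degP j ≤ S.muY j (f j * a) := Nat.sInf_le ⟨_, hs, ha, rfl⟩
    have := h j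
    omega
  · intro h j
    by_contra hlt
    obtain ⟨a, ha, hs⟩ := S.aux_exists_socle j 1 one_ne_zero
    have hne : {m : ℕ | ∃ sj : (S.pt j).carrier,
        S.IsSocle j sj ∧ sj ≠ 0 ∧ m = S.muY j sj}.Nonempty := ⟨_, _, hs, ha, rfl⟩
    obtain ⟨sj, -, hsj, he⟩ := Nat.sInf_mem hne
    have h1 : S.muY j sj ≤ d := by
      rw [← he]
      change S.degP j ≤ d
      omega
    rw [aux_muY_le S j sj hsj] at h1
    have h2 : (Pi.single j sj : S.Gamma) ∈ S.cond d := by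
      rw [aux_mem_cond]
      intro y
      rw [aux_single_mul, mul_comm]
      exact h1 _
    rw [h d le_rfl, Submodule.mem_bot] at h2
    exact hsj (by simpa using congrFun h2 j)

theorem aux_cond_top {K : Type} [Field K] {n : ℕ} (S : ZeroDimScheme K n) (i : ℕ)
    (hi : S.rX ≤ i) : S.cond i = ⊤ := by
  obtain ⟨N, hN⟩ := S.eventually_surj
  have hne : {r : ℕ | ∀ i, r ≤ i → S.HF i = S.degX}.Nonempty :=
    ⟨N, fun k hk => by
      have : S.V k = ⊤ := hN k hk
      unfold HF degX
      rw [this]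
      exact finrank_top K S.Gamma⟩
  have h1 : S.HF i = S.degX := Nat.sInf_mem hne i hi
  have h2 : S.V i = ⊤ := Submodule.eq_top_of_finrank_eq h1
  rw [eq_top_iff]
  intro f _
  rw [aux_mem_cond, h2]
  intro y
  trivial

end ZeroDimScheme

/-- Theorem 5.4 / `thmSec4.4`.  Let `𝕏 ⊆ ℙⁿ_K` be a 0-dimensional
scheme and `0 ≤ d ≤ r_𝕏 - 1`.  Then `𝕏` has `CBP(d)` iff
`𝔉_{R̃/R} ⊆ ⊕_{i ≥ d+1} R_i` (degreewise: the conductor vanishes in all degrees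
`≤ d`).  In particular, `𝕏` is a Cayley–Bacharach scheme iff
`𝔉_{R̃/R} = ⊕_{i ≥ r_𝕏} R_i` (degreewise: `𝔉_i = 0` for `i < r_𝕏`, and `𝔉_i` is
all of `R_i ≅ Γ` for `i ≥ r_𝕏`). -/
theorem dedekind_CB_stmt10 (K : Type) [Field K] (n : ℕ) (S : ZeroDimScheme K n)
    (d : ℕ) (hd : d + 1 ≤ S.rX) :
    (S.CBP d ↔ ∀ i : ℕ, i ≤ d → S.cond i = ⊥) ∧
    (S.CayleyBacharach ↔
      ∀ i : ℕ, S.cond i = if S.rX ≤ i then (⊤ : Submodule K S.Gamma) else ⊥) := by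
  refine ⟨S.aux_CBP d, (S.aux_CBP (S.rX - 1)).trans ⟨fun h i => ?_, fun h i hi => ?_⟩⟩
  · split_ifs with hi
    · exact S.aux_cond_top i hi
    · exact h i (by omega)
  · rw [h i, if_neg (by omega)]
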